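/- There is a universal constant c > 0 and a randomized algorithm for bandit convex optimization, using exactly three loss-value queries per round (the played point plus two additional queried points, with the additional points of the form A(t) and A(t)+δ_t·u for δ_t = 1/(κT) and u a uniformly random unit vector), such that for every contiguous interval I = [j,s] ⊆ [T], the expected adaptive regret satisfies E[Σ_{t∈I} ℓ_t(x_t)] − min_{x∈K} Σ_{t∈I} ℓ_t(x) ≤ c · d·G·D·√|I| · (log T)². -/

import Mathlib

open MeasureTheory

/-- One round of interaction in the three-query BCO model is recorded as
`(x, y, u, ℓ x, ℓ y, ℓ (y + δ u))`: the played point, the base query point, the unit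
perturbation direction, and the three observed loss values. -/
abbrev BCORecord (d : ℕ) :=
  EuclideanSpace ℝ (Fin d) × EuclideanSpace ℝ (Fin d) × EuclideanSpace ℝ (Fin d) × ℝ × ℝ × ℝ

/-- A randomized three-query BCO algorithm on domain `K`: an internal probability space
`(Ω, μ)` together with a map sending each interaction history (and the internal
randomness) to the played point `x ∈ K`, a base query point `y` and a unit direction
`u`; the three loss values queried at round `t` are `ℓ t x`, `ℓ t y` and
`ℓ t (y + δ • u)`, all chosen before `ℓ t` is revealed. -/
structure BCOAlg3 (d : ℕ) (K : Set (EuclideanSpace ℝ (Fin d))) where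
  Ω : Type
  inst : MeasurableSpace Ω
  μ : @Measure Ω inst
  prob : @IsProbabilityMeasure Ω inst μ
  act : List (BCORecord d) → Ω →
    EuclideanSpace ℝ (Fin d) × EuclideanSpace ℝ (Fin d) × EuclideanSpace ℝ (Fin d)
  play_mem : ∀ h ω, (act h ω).1 ∈ K
  unit_dir : ∀ h ω, ‖(act h ω).2.2‖ = 1

attribute [instance] BCOAlg3.inst BCOAlg3.prob

/-- The interaction history of a three-query BCO algorithm after `t` rounds against the
oblivious loss sequence `ℓ`, with perturbation radius `δ`. -/
noncomputable def bcoHist3 {d : ℕ} {K : Set (EuclideanSpace ℝ (Fin d))}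
    (A : BCOAlg3 d K) (δ : ℝ) (ℓ : ℕ → EuclideanSpace ℝ (Fin d) → ℝ) :
    ℕ → A.Ω → List (BCORecord d)
  | 0, _ => []
  | t + 1, ω =>
      let h := bcoHist3 A δ ℓ t ω
      let a := A.act h ω
      h ++ [(a.1, a.2.1, a.2.2, ℓ t a.1, ℓ t a.2.1, ℓ t (a.2.1 + δ • a.2.2))]

/-- The point played at round `t`. -/
noncomputable def bcoPlay3 {d : ℕ} {K : Set (EuclideanSpace ℝ (Fin d))}
    (A : BCOAlg3 d K) (δ : ℝ) (ℓ : ℕ → EuclideanSpace ℝ (Fin d) → ℝ)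
    (t : ℕ) (ω : A.Ω) : EuclideanSpace ℝ (Fin d) :=
  (A.act (bcoHist3 A δ ℓ t ω) ω).1

/-- A finite convex function that is `G`-Lipschitz has a subgradient of norm at most `G`
at every point. -/
theorem exists_subgradient_norm_le {E : Type*} [NormedAddCommGroup E] [InnerProductSpace ℝ E]
    [CompleteSpace E] {f : E → ℝ} {G : ℝ} (hG0 : 0 ≤ G)
    (hf : ConvexOn ℝ Set.univ f)
    (hG : ∀ x y, |f x - f y| ≤ G * ‖x - y‖) (p : E) :
    ∃ s : E, ‖s‖ ≤ G ∧ ∀ z, f p + inner ℝ s (z - p) ≤ f z := by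
  have hcont : Continuous f := by
    refine (LipschitzWith.of_dist_le_mul (K := G.toNNReal) fun x y => ?_).continuous
    rw [Real.dist_eq, dist_eq_norm]
    exact (hG x y).trans (mul_le_mul_of_nonneg_right (Real.le_coe_toNNReal G) (norm_nonneg _))
  have hopen : IsOpen {q : E × ℝ | q.1 ∈ Set.univ ∧ f q.1 < q.2} := by
    simpa using isOpen_lt (hcont.comp continuous_fst) continuous_snd
  obtain ⟨φ, hφ⟩ := geometric_hahn_banach_open_point hf.convex_strict_epigraph hopen
    (x := (p, f p)) (by simp)
  have hsplit : ∀ (z : E) (a : ℝ), φ (z, a) = φ (z, 0) + a * φ (0, 1) := by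
    intro z a
    have : (z, a) = (z, (0 : ℝ)) + a • ((0 : E), (1 : ℝ)) := by simp
    rw [this, map_add, map_smul, smul_eq_mul]
  set b := φ (0, 1) with hb
  have hbneg : b < 0 := by
    have h := hφ (p, f p + 1) (by simp)
    rw [hsplit, hsplit p (f p)] at h
    linarith
  have hle : ∀ z, φ (z, 0) + f z * b ≤ φ (p, 0) + f p * b := by
    intro z
    refine le_of_forall_pos_lt_add fun η hη => ?_
    have h := hφ (z, f z + η / (-b)) (by simpa using div_pos hη (neg_pos.2 hbneg))
    rw [hsplit, hsplit p (f p)] at h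
    have : η / (-b) * b = -η := by rw [div_neg, neg_mul, div_mul_cancel₀ _ hbneg.ne]
    linarith
  let ψ : E →L[ℝ] ℝ := (-b)⁻¹ • φ.comp (ContinuousLinearMap.inl ℝ E ℝ)
  let s : E := (InnerProductSpace.toDual ℝ E).symm ψ
  have hs : ∀ z, f p + inner ℝ s (z - p) ≤ f z := by
    intro z
    have h1 : inner ℝ s (z - p) = (-b)⁻¹ * (φ (z, 0) - φ (p, 0)) := by
      simp only [s, ψ, InnerProductSpace.toDual_symm_apply, map_sub]
      simp [mul_sub]
    have h2 : (-b)⁻¹ * (φ (z, 0) - φ (p, 0)) ≤ f z - f p := by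
      rw [inv_mul_le_iff₀ (neg_pos.2 hbneg)]
      linarith [hle z]
    linarith
  refine ⟨s, ?_, hs⟩
  have h1 := hs (p + s)
  have h2 := (le_abs_self _).trans (hG (p + s) p)
  simp only [add_sub_cancel_left, real_inner_self_eq_norm_sq] at h1 h2
  by_contra! hlt
  nlinarith [norm_nonneg s]

theorem exists_projection {E : Type*} [NormedAddCommGroup E] [InnerProductSpace ℝ E]
    [CompleteSpace E] {C : Set E} (hne : C.Nonempty) (hcl : IsClosed C) (hC : Convex ℝ C) :
    ∃ P : E → E, (∀ x, P x ∈ C) ∧ ∀ x, ∀ y ∈ C, ‖P x - y‖ ^ 2 ≤ ‖x - y‖ ^ 2 := by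
  choose P hP hmin using exists_norm_eq_iInf_of_complete_convex hne hcl.isComplete hC
  refine ⟨P, hP, fun x y hy => ?_⟩
  have h := (norm_eq_iInf_iff_real_inner_le_zero hC (hP x)).1 (hmin x) y hy
  have h1 : x - y = (x - P x) - (y - P x) := by abel
  have h2 := norm_sub_sq_real (x - P x) (y - P x)
  rw [← h1, norm_sub_rev y] at h2
  nlinarith [sq_nonneg ‖x - P x‖]

/-- Projected online gradient descent with a constant step has small regret on every
contiguous block of rounds. -/
theorem sum_inner_le_of_projected_descent {E : Type*} [NormedAddCommGroup E]
    [InnerProductSpace ℝ E] {P : E → E} {y : E} {z g : ℕ → E} {γ L : ℝ} (hγ : 0 < γ)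
    (hP : ∀ x, ‖P x - y‖ ^ 2 ≤ ‖x - y‖ ^ 2) (hz : ∀ t, z (t + 1) = P (z t - γ • g t))
    (hg : ∀ t, ‖g t‖ ≤ L) (j n : ℕ) :
    ∑ i ∈ Finset.range n, inner ℝ (g (j + i)) (z (j + i) - y)
      ≤ ‖z j - y‖ ^ 2 / (2 * γ) + γ * L ^ 2 * n / 2 := by
  have key : ∀ t, 2 * γ * inner ℝ (g t) (z t - y)
      ≤ ‖z t - y‖ ^ 2 - ‖z (t + 1) - y‖ ^ 2 + γ ^ 2 * L ^ 2 := by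
    intro t
    have h1 := hP (z t - γ • g t)
    rw [← hz, show z t - γ • g t - y = (z t - y) - γ • g t by abel,
      norm_sub_sq_real (z t - y),
      inner_smul_right, real_inner_comm, norm_smul, Real.norm_of_nonneg hγ.le] at h1
    have h2 : (γ * ‖g t‖) ^ 2 ≤ γ ^ 2 * L ^ 2 := by
      rw [mul_pow]
      gcongr
      exact hg t
    linarith
  have main : 2 * γ * ∑ i ∈ Finset.range n, inner ℝ (g (j + i)) (z (j + i) - y)
      ≤ ‖z j - y‖ ^ 2 - ‖z (j + n) - y‖ ^ 2 + γ ^ 2 * L ^ 2 * n := by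
    induction n with
    | zero => simp
    | succ n ih =>
      rw [Finset.sum_range_succ, mul_add]
      push_cast
      have := key (j + n)
      rw [← add_assoc]
      linarith
  have h3 : ‖z j - y‖ ^ 2 / (2 * γ) + γ * L ^ 2 * n / 2
      = (‖z j - y‖ ^ 2 + γ ^ 2 * L ^ 2 * n) / (2 * γ) := by
    field_simp
  rw [h3, le_div_iff₀ (by positivity)]
  nlinarith [sq_nonneg ‖z (j + n) - y‖]

/-- Multiplicative weights with one learning rate per expert and a fixed share `α` of uniform
mass: the regret to each expert is controlled on every contiguous block of rounds. -/
theorem sum_regret_le_of_fixed_share {M : ℕ} (hM : 0 < M) {η : Fin M → ℝ} {α : ℝ}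
    {a r : ℕ → Fin M → ℝ} (hη : ∀ k, 0 < η k) (hη' : ∀ k, η k ≤ 1 / 2) (hα : 0 < α)
    (hα' : α ≤ 1 / 2) (h0 : ∀ k, a 0 k = 1 / M)
    (hstep : ∀ t k, a (t + 1) k = (1 - α) * (a t k * (1 + η k * r t k)) + α / M)
    (hr : ∀ t, (∀ k, 0 < a t k) → ∀ k, |r t k| ≤ 1)
    (hbal : ∀ t, (∀ k, 0 < a t k) → ∑ k, η k * a t k * r t k = 0) :
    (∀ t k, 0 < a t k) ∧ ∀ (k : Fin M) (j n : ℕ), ∑ i ∈ Finset.range n, r (j + i) k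
      ≤ 2 * η k * n + (Real.log (M / α) + 2 * α * n) / η k := by
  have hM' : (0 : ℝ) < M := by exact_mod_cast hM
  have hx : ∀ t, (∀ k, 0 < a t k) → ∀ k, -(1 / 2) ≤ η k * r t k := by
    intro t ht k
    have := abs_le.1 (hr t ht k)
    nlinarith [hη k, hη' k]
  have hpos : ∀ t, ∀ k, α / M ≤ a t k := by
    intro t
    induction t with
    | zero =>
      intro k
      rw [h0]
      gcongr
      linarith
    | succ t ih =>
      intro k
      have hp : ∀ k, 0 < a t k := fun k => (div_pos hα hM').trans_le (ih k)
      rw [hstep]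
      have h1 := hx t hp k
      have : 0 ≤ (1 - α) * (a t k * (1 + η k * r t k)) :=
        mul_nonneg (by linarith) (mul_nonneg (hp k).le (by linarith))
      linarith
  have hp : ∀ t k, 0 < a t k := fun t k => (div_pos hα hM').trans_le (hpos t k)
  refine ⟨hp, fun k j n => ?_⟩
  have hsum : ∀ t, ∑ k, a t k = 1 := by
    intro t
    induction t with
    | zero =>
      simp only [h0, Finset.sum_const, Finset.card_univ, Fintype.card_fin, nsmul_eq_mul]
      field_simp
    | succ t ih =>
      have h1 : ∑ k, a t k * (1 + η k * r t k) = 1 := by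
        have h2 : ∑ k, a t k * (1 + η k * r t k) = ∑ k, a t k + ∑ k, η k * a t k * r t k := by
          rw [← Finset.sum_add_distrib]
          exact Finset.sum_congr rfl fun k _ => by ring
        rw [h2, ih, hbal t (hp t), add_zero]
      simp only [hstep, Finset.sum_add_distrib, ← Finset.mul_sum, h1, Finset.sum_const,
        Finset.card_univ, Fintype.card_fin, nsmul_eq_mul]
      field_simp
      ring
  have hle1 : ∀ t, a t k ≤ 1 := fun t => by
    rw [← hsum t]
    exact Finset.single_le_sum (fun k _ => (hp t k).le) (Finset.mem_univ k)
  have hlog : ∀ t, η k * r t k ≤ Real.log (a (t + 1) k) - Real.log (a t k)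
      + 2 * η k ^ 2 + 2 * α := by
    intro t
    set x := η k * r t k with hxdef
    have hx1 : -(1 / 2) ≤ x := hx t (hp t) k
    have hx2 : x ^ 2 ≤ η k ^ 2 := by
      rw [hxdef, mul_pow]
      have : r t k ^ 2 ≤ 1 := (sq_le_one_iff_abs_le_one _).2 (hr t (hp t) k)
      nlinarith [sq_nonneg (η k)]
    have hpx : 0 < 1 + x := by linarith
    have h1 : Real.log ((1 - α) * (a t k * (1 + x))) ≤ Real.log (a (t + 1) k) := by
      refine Real.log_le_log (mul_pos (by linarith) (mul_pos (hp t k) hpx)) ?_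
      rw [hstep]
      linarith [div_pos hα hM']
    rw [Real.log_mul (by linarith) (mul_pos (hp t k) hpx).ne',
      Real.log_mul (hp t k).ne' hpx.ne'] at h1
    have h2 : x - 2 * x ^ 2 ≤ Real.log (1 + x) := by
      refine le_trans ?_ (Real.one_sub_inv_le_log_of_pos hpx)
      rw [show 1 - (1 + x)⁻¹ = x / (1 + x) by field_simp; ring, le_div_iff₀ hpx]
      nlinarith [mul_nonneg (sq_nonneg x) (by linarith : 0 ≤ 1 + 2 * x)]
    have h3 : -(2 * α) ≤ Real.log (1 - α) := by
      refine le_trans ?_ (Real.one_sub_inv_le_log_of_pos (by linarith : 0 < 1 - α))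
      have hα1 : 0 < 1 - α := by linarith
      rw [show 1 - (1 - α)⁻¹ = -α / (1 - α) by field_simp; ring, le_div_iff₀ hα1]
      nlinarith
    linarith
  have main : η k * ∑ i ∈ Finset.range n, r (j + i) k
      ≤ Real.log (a (j + n) k) - Real.log (a j k) + (2 * η k ^ 2 + 2 * α) * n := by
    induction n with
    | zero => simp
    | succ n ih =>
      rw [Finset.sum_range_succ, mul_add]
      push_cast
      have := hlog (j + n)
      rw [← add_assoc]
      linarith
  have h1 : Real.log (a (j + n) k) ≤ 0 := Real.log_nonpos (hp _ _).le (hle1 _)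
  have h2 : -Real.log (a j k) ≤ Real.log (M / α) := by
    rw [← Real.log_inv]
    refine Real.log_le_log (inv_pos.2 (hp _ _)) ?_
    rw [inv_le_comm₀ (hp _ _) (by positivity), inv_div]
    exact hpos j k
  have h3 : 2 * η k * n + (Real.log (M / α) + 2 * α * n) / η k
      = (2 * η k ^ 2 * n + Real.log (M / α) + 2 * α * n) / η k := by
    have := (hη k).ne'
    field_simp
    ring
  rw [h3, le_div_iff₀ (hη k)]
  linarith

/-- One round of the strongly adaptive learner. The state assigns to every expert `k` its
position and its weight; expert `k` runs projected gradient descent with step `γ k`, and the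
weights are updated with learning rate `η k` and fixed share `α`. -/
noncomputable def adaptiveStep {E : Type*} [NormedAddCommGroup E] [InnerProductSpace ℝ E] {M : ℕ}
    (P : E → E) (γ η : Fin M → ℝ) (α B : ℝ) (S : Fin M → E × ℝ) (g : E) : Fin M → E × ℝ :=
  fun k => (P ((S k).1 - γ k • g),
    (1 - α) * ((S k).2 * (1 + η k * (inner ℝ g
      (Finset.univ.centerMass (fun i => η i * (S i).2) (fun i => (S i).1) - (S k).1) / B)))
      + α / M)

/-- Deterministic online linear optimization with regret `O(D L √n log T)` on every block of
`n ≤ T` consecutive rounds. -/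
theorem exists_strongly_adaptive_learner {E : Type*} [NormedAddCommGroup E]
    [InnerProductSpace ℝ E] [CompleteSpace E] {C : Set E} {D L : ℝ} {T : ℕ}
    (hne : C.Nonempty) (hcl : IsClosed C) (hC : Convex ℝ C)
    (hCD : C ⊆ Metric.closedBall 0 D) (hD : 0 < D) (hL : 0 < L) (hT : 2 ≤ T) :
    ∃ W : List E → E, (∀ h, W h ∈ C) ∧ ∀ g : ℕ → E, (∀ t, ‖g t‖ ≤ L) →
      ∀ j n : ℕ, 1 ≤ n → n ≤ T → ∀ y ∈ C,
        ∑ i ∈ Finset.range n, inner ℝ (g (j + i)) (W ((List.range (j + i)).map g) - y)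
          ≤ D * L * √n * (8 * Real.log T + 13) := by
  classical
  obtain ⟨P, hPC, hP⟩ := exists_projection hne hcl hC
  obtain ⟨z₀, hz₀⟩ := hne
  have hT' : (2 : ℝ) ≤ T := by exact_mod_cast hT
  have hdiam : ∀ x ∈ C, ∀ y ∈ C, ‖x - y‖ ≤ 2 * D := by
    intro x hx y hy
    have h1 := mem_closedBall_zero_iff.1 (hCD hx)
    have h2 := mem_closedBall_zero_iff.1 (hCD hy)
    linarith [norm_sub_le x y]
  let γ : Fin T → ℝ := fun k => D / (L * √((k : ℝ) + 1))
  let η : Fin T → ℝ := fun k => 1 / (2 * √((k : ℝ) + 1))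
  have hηpos : ∀ k, 0 < η k := fun k => by positivity
  have hηle : ∀ k, η k ≤ 1 / 2 := fun k => by
    have : 1 ≤ √((k : ℝ) + 1) := Real.one_le_sqrt.2 (by linarith [Nat.cast_nonneg (α := ℝ) (k : ℕ)])
    refine one_div_le_one_div_of_le (by norm_num) (by linarith)
  let S₀ : Fin T → E × ℝ := fun _ => (z₀, 1 / T)
  let center : (Fin T → E × ℝ) → E := fun S =>
    Finset.univ.centerMass (fun i => η i * (S i).2) (fun i => (S i).1)
  let state : List E → Fin T → E × ℝ :=
    List.foldl (adaptiveStep P γ η (1 / T) (2 * D * L)) S₀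
  refine ⟨fun h => if center (state h) ∈ C then center (state h) else z₀, fun h => ?_, ?_⟩
  · dsimp only
    split_ifs with hc
    exacts [hc, hz₀]
  intro g hg j n hn hnT y hy
  let S : ℕ → Fin T → E × ℝ := fun t => state ((List.range t).map g)
  have hS : ∀ t, S (t + 1) = adaptiveStep P γ η (1 / T) (2 * D * L) (S t) (g t) := fun t => by
    simp only [S, state, List.range_succ, List.map_append, List.foldl_append, List.map_cons,
      List.map_nil, List.foldl_cons, List.foldl_nil]
  have hzC : ∀ t k, (S t k).1 ∈ C := by
    intro t k
    cases t with
    | zero => exact hz₀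
    | succ t =>
      rw [hS]
      exact hPC _
  have hwpos : ∀ t, (∀ k, 0 < (S t k).2) → 0 < ∑ k, η k * (S t k).2 := fun t ht =>
    Finset.sum_pos (fun k _ => mul_pos (hηpos k) (ht k)) ⟨⟨0, by omega⟩, Finset.mem_univ _⟩
  have hcC : ∀ t, (∀ k, 0 < (S t k).2) → center (S t) ∈ C := fun t ht =>
    hC.centerMass_mem (fun k _ => (mul_pos (hηpos k) (ht k)).le) (hwpos t ht)
      fun k _ => hzC t k
  let r : ℕ → Fin T → ℝ := fun t k => inner ℝ (g t) (center (S t) - (S t k).1) / (2 * D * L)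
  obtain ⟨hpos, hreg⟩ := sum_regret_le_of_fixed_share (M := T) (by omega) (η := η)
    (α := 1 / (T : ℝ)) (a := fun t k => (S t k).2) (r := r) hηpos hηle (by positivity)
    (one_div_le_one_div_of_le (by norm_num) hT') (fun k => rfl)
    (fun t k => by simp only [hS]; rfl)
    (fun t ht k => by
      simp only [r]
      rw [abs_div, abs_of_pos (by positivity : 0 < 2 * D * L), div_le_one (by positivity)]
      calc |inner ℝ (g t) (center (S t) - (S t k).1)|
          ≤ ‖g t‖ * ‖center (S t) - (S t k).1‖ := abs_real_inner_le_norm _ _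
        _ ≤ L * (2 * D) := by
            gcongr
            exacts [hg t, hdiam _ (hcC t ht) _ (hzC t k)]
        _ = 2 * D * L := by ring)
    (fun t ht => by
      have h1 : ∑ k, η k * (S t k).2 * r t k
          = inner ℝ (g t) (∑ k, (η k * (S t k).2) • (center (S t) - (S t k).1))
            / (2 * D * L) := by
        rw [inner_sum, Finset.sum_div]
        refine Finset.sum_congr rfl fun k _ => ?_
        rw [inner_smul_right, mul_div_assoc]
      have h2 : ∑ k, (η k * (S t k).2) • (center (S t) - (S t k).1) = 0 := by
        simp only [smul_sub, Finset.sum_sub_distrib, ← Finset.sum_smul]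
        simp only [center, Finset.centerMass]
        rw [smul_inv_smul₀ (hwpos t ht).ne', sub_self]
      rw [h1, h2, inner_zero_right, zero_div])
  let k : Fin T := ⟨n - 1, by omega⟩
  have hk : ((k : ℕ) : ℝ) + 1 = n := by
    simp only [k]
    exact_mod_cast Nat.sub_add_cancel hn
  have hn0 : (0 : ℝ) < n := by exact_mod_cast hn
  have hsq : 0 < √(n : ℝ) := Real.sqrt_pos.2 hn0
  have hsq2 : √(n : ℝ) * √n = n := Real.mul_self_sqrt hn0.le
  have hmeta := hreg k j n
  have hbase := sum_inner_le_of_projected_descent (P := P) (y := y) (z := fun t => (S t k).1)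
    (g := g) (γ := γ k) (L := L) (by positivity) (fun x => hP x y hy)
    (fun t => by simp only [hS]; rfl) hg j n
  have hsplit : ∑ i ∈ Finset.range n, inner ℝ (g (j + i))
        ((if center (state ((List.range (j + i)).map g)) ∈ C
          then center (state ((List.range (j + i)).map g)) else z₀) - y)
      = 2 * D * L * ∑ i ∈ Finset.range n, r (j + i) k
        + ∑ i ∈ Finset.range n, inner ℝ (g (j + i)) ((S (j + i) k).1 - y) := by
    rw [Finset.mul_sum, ← Finset.sum_add_distrib]
    refine Finset.sum_congr rfl fun i _ => ?_
    rw [if_pos (hcC (j + i) (hpos (j + i)))]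
    simp only [r]
    rw [mul_div_cancel₀ _ (by positivity), ← inner_add_right]
    congr 1
    simp only [S]
    abel
  simp only [hsplit]
  have hηk : η k = 1 / (2 * √n) := by simp only [η, hk]
  have hγk : γ k = D / (L * √n) := by simp only [γ, hk]
  have hlog : Real.log (T / (1 / T)) = 2 * Real.log T := by
    rw [div_div_eq_mul_div, div_one, Real.log_mul (by positivity) (by positivity)]
    ring
  have hmeta' : ∑ i ∈ Finset.range n, r (j + i) k ≤ √n * (4 * Real.log T + 5) := by
    refine hmeta.trans ?_
    rw [hηk, hlog]
    have h1 : (n : ℝ) / T ≤ 1 := (div_le_one (by positivity)).2 (by exact_mod_cast hnT)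
    have h2 : 2 * (1 / (2 * √(n : ℝ))) * n = √n := by
      field_simp
      exact (Real.sq_sqrt hn0.le).symm
    have h3 : (2 * Real.log T + 2 * (1 / (T : ℝ)) * n) / (1 / (2 * √n))
        = √n * (4 * Real.log T + 4 * (n / T)) := by
      field_simp
      ring
    rw [h2, h3]
    nlinarith
  have hbase' : ∑ i ∈ Finset.range n, inner ℝ (g (j + i)) ((S (j + i) k).1 - y)
      ≤ D * L * √n * 3 := by
    refine hbase.trans ?_
    have h1 : ‖(S j k).1 - y‖ ^ 2 ≤ (2 * D) ^ 2 := by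
      gcongr
      exact hdiam _ (hzC j k) _ hy
    have h2 : ‖(S j k).1 - y‖ ^ 2 / (2 * γ k) ≤ (2 * D) ^ 2 / (2 * γ k) := by
      gcongr
    have h3 : (2 * D) ^ 2 / (2 * γ k) = 2 * (D * L * √n) := by
      rw [hγk]
      field_simp
    have h4 : γ k * L ^ 2 * n / 2 = D * L * √n / 2 := by
      rw [hγk]
      field_simp
      exact (Real.sq_sqrt hn0.le).symm
    have : 0 < D * L * √n := by positivity
    linarith
  calc _ ≤ 2 * D * L * (√n * (4 * Real.log T + 5)) + D * L * √n * 3 := by gcongr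
    _ = _ := by ring

/-- Resampling one coordinate does not change a uniform average. -/
theorem sum_sum_update {ι S : Type*} [Fintype ι] [DecidableEq ι] [Fintype S]
    (F : (ι → S) → ℝ) (i : ι) :
    ∑ v, ∑ s, F (Function.update v i s) = Fintype.card S * ∑ v, F v := by
  let e : (ι → S) × S → (ι → S) × S := fun q => (Function.update q.1 i q.2, q.1 i)
  have he : Function.Involutive e := fun q => by simp [e]
  calc ∑ v, ∑ s, F (Function.update v i s) = ∑ q : (ι → S) × S, F (e q).1 := by
        rw [Fintype.sum_prod_type]
    _ = ∑ q : (ι → S) × S, F q.1 := Equiv.sum_comp (he.toPerm e) fun q => F q.1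
    _ = Fintype.card S * ∑ v, F v := by
        rw [Fintype.sum_prod_type, Finset.mul_sum]
        simp

/-- The point of the integer grid with coordinates `v`. -/
def gridPoint {d N : ℕ} (v : Fin d → Fin N) : EuclideanSpace ℝ (Fin d) :=
  WithLp.toLp 2 fun i => ((v i : ℕ) : ℝ)

theorem norm_gridPoint_le {d N : ℕ} (v : Fin d → Fin N) : ‖gridPoint v‖ ≤ N * d := by
  have hcoord : ∀ i, ‖gridPoint v i‖ ^ 2 ≤ (N : ℝ) ^ 2 := fun i => by
    have h : ((v i : ℕ) : ℝ) ≤ N := by exact_mod_cast (v i).2.le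
    simp only [gridPoint, Real.norm_natCast]
    gcongr
  rw [EuclideanSpace.norm_eq, Real.sqrt_le_left (by positivity)]
  refine (Finset.sum_le_sum fun i _ => hcoord i).trans ?_
  simp only [Finset.sum_const, Finset.card_univ, Fintype.card_fin, nsmul_eq_mul]
  have h : (d : ℝ) ≤ (d : ℝ) ^ 2 := by exact_mod_cast Nat.le_self_pow two_ne_zero d
  nlinarith [sq_nonneg (N : ℝ)]

theorem gridPoint_update {d N : ℕ} (v : Fin d → Fin N) (i : Fin d) (m : Fin N) :
    gridPoint (Function.update v i m)
      = gridPoint (Function.update v i ⟨0, m.pos⟩) + (m : ℝ) • EuclideanSpace.single i 1 := by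
  ext k
  by_cases h : k = i
  · subst h
    simp [gridPoint]
  · simp [gridPoint, h]

/-- Averaged over the grid, forward difference quotients of a Lipschitz function exceed backward
ones by `O(G / N)`, by telescoping along coordinate lines. -/
theorem sum_second_difference_le {d N : ℕ} (hN : 0 < N) {f : EuclideanSpace ℝ (Fin d) → ℝ}
    {G ε : ℝ} (hε : 0 < ε) (hG : ∀ x y, |f x - f y| ≤ G * ‖x - y‖)
    (q : EuclideanSpace ℝ (Fin d)) (i : Fin d) :
    ∑ v : Fin d → Fin N, ((f (q + ε • gridPoint v + ε • EuclideanSpace.single i 1)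
        - f (q + ε • gridPoint v)) / ε
      - (f (q + ε • gridPoint v) - f (q + ε • gridPoint v - ε • EuclideanSpace.single i 1)) / ε)
      ≤ Fintype.card (Fin d → Fin N) * (2 * G / N) := by
  set e : EuclideanSpace ℝ (Fin d) := EuclideanSpace.single i 1
  have hN' : (0 : ℝ) < N := by exact_mod_cast hN
  have he : ‖ε • e‖ = ε := by simp [e, norm_smul, abs_of_pos hε]
  let F : (Fin d → Fin N) → ℝ := fun v =>
    (f (q + ε • gridPoint v + ε • e) - f (q + ε • gridPoint v)) / ε
      - (f (q + ε • gridPoint v) - f (q + ε • gridPoint v - ε • e)) / ε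
  have hline : ∀ v : Fin d → Fin N, ∑ m, F (Function.update v i m) ≤ 2 * G := by
    intro v
    set b := q + ε • gridPoint (Function.update v i ⟨0, hN⟩) with hb
    let φ : ℕ → ℝ := fun m => (f (b + (m * ε) • e) - f (b + (m * ε) • e - ε • e)) / ε
    have hφ : ∀ m, |φ m| ≤ G := by
      intro m
      simp only [φ]
      rw [abs_div, abs_of_pos hε, div_le_iff₀ hε]
      refine (hG _ _).trans_eq ?_
      rw [sub_sub_cancel, he]
    have hF : ∀ m : Fin N, F (Function.update v i m) = φ (m + 1) - φ m := by
      intro m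
      have h1 : q + ε • gridPoint (Function.update v i m) = b + ((m : ℝ) * ε) • e := by
        rw [gridPoint_update, hb, smul_add, smul_smul, mul_comm ε, add_assoc]
      have h2 : b + (((m + 1 : ℕ) : ℝ) * ε) • e = b + ((m : ℝ) * ε) • e + ε • e := by
        push_cast
        module
      simp only [F, φ]
      rw [h1, h2, add_sub_cancel_right]
    rw [Finset.sum_congr rfl fun m _ => hF m,
      Fin.sum_univ_eq_sum_range (fun m => φ (m + 1) - φ m) N, Finset.sum_range_sub]
    have h1 := abs_le.1 (hφ N)
    have h2 := abs_le.1 (hφ 0)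
    linarith
  have h := sum_sum_update F i
  have h' : ∑ v : Fin d → Fin N, ∑ m, F (Function.update v i m)
      ≤ ∑ _v : Fin d → Fin N, 2 * G := Finset.sum_le_sum fun v _ => hline v
  rw [h, Fintype.card_fin, Finset.sum_const, Finset.card_univ, nsmul_eq_mul] at h'
  rw [← mul_div_assoc, le_div_iff₀ hN', mul_comm]
  exact h'

/-- The coordinate difference quotient at a random grid point is, on average, an approximate
subgradient. -/
theorem sum_loss_sub_le_sum_inner {d N : ℕ} (hN : 0 < N)
    {f : EuclideanSpace ℝ (Fin d) → ℝ} {G D ε ρ : ℝ} (hε : 0 < ε) (hρ : 0 ≤ ρ) (hG0 : 0 ≤ G)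
    (hf : ConvexOn ℝ Set.univ f) (hG : ∀ x y, |f x - f y| ≤ G * ‖x - y‖)
    {w y : EuclideanSpace ℝ (Fin d)} (hw : ‖w‖ ≤ D) (hy : ‖y‖ ≤ D) :
    ∑ σ : Fin d × (Fin d → Fin N), (f ((1 - ρ) • w + ε • gridPoint σ.2) - f y
        - inner ℝ ((d * ((f ((1 - ρ) • w + ε • gridPoint σ.2 + ε • EuclideanSpace.single σ.1 1)
          - f ((1 - ρ) • w + ε • gridPoint σ.2)) / ε)) • EuclideanSpace.single σ.1 (1 : ℝ))
          (w - y))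
      ≤ Fintype.card (Fin d × (Fin d → Fin N))
        * (G * (ε * (N * d) + ρ * D) + d * (2 * D * (2 * G / N))) := by
  let p : (Fin d → Fin N) → EuclideanSpace ℝ (Fin d) := fun v => (1 - ρ) • w + ε • gridPoint v
  let Δ : Fin d → (Fin d → Fin N) → ℝ := fun i v =>
    (f (p v + ε • EuclideanSpace.single i 1) - f (p v)) / ε
  let Δ' : Fin d → (Fin d → Fin N) → ℝ := fun i v =>
    (f (p v) - f (p v - ε • EuclideanSpace.single i 1)) / ε
  choose s hsG hs using fun v => exists_subgradient_norm_le hG0 hf hG (p v)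
  have hcoord : ∀ (x : EuclideanSpace ℝ (Fin d)) i,
      inner ℝ x (ε • EuclideanSpace.single i (1 : ℝ)) = ε * x i := fun x i => by
    simp [inner_smul_right, EuclideanSpace.inner_single_right]
  have hsΔ : ∀ i v, s v i ≤ Δ i v := fun i v => by
    have h := hs v (p v + ε • EuclideanSpace.single i 1)
    rw [add_sub_cancel_left, hcoord] at h
    rw [le_div_iff₀ hε]
    linarith
  have hΔs : ∀ i v, Δ' i v ≤ s v i := fun i v => by
    have h := hs v (p v - ε • EuclideanSpace.single i 1)
    rw [sub_sub_cancel_left, inner_neg_right, hcoord] at h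
    rw [div_le_iff₀ hε]
    linarith
  have hdiff : ∀ i, |∑ v, (s v i - Δ i v)| ≤ Fintype.card (Fin d → Fin N) * (2 * G / N) := by
    intro i
    have h1 := sum_second_difference_le hN hε hG ((1 - ρ) • w) i
    have h2 : ∑ v, (Δ i v - s v i) ≤ ∑ v, (Δ i v - Δ' i v) :=
      Finset.sum_le_sum fun v _ => by linarith [hΔs i v]
    have h3 : ∑ v, (s v i - Δ i v) ≤ 0 :=
      Finset.sum_nonpos fun v _ => by linarith [hsΔ i v]
    rw [abs_of_nonpos h3, ← Finset.sum_neg_distrib]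
    simp only [neg_sub]
    exact h2.trans h1
  have hwy : ∀ i, |(w - y) i| ≤ 2 * D := fun i => by
    have h := PiLp.norm_apply_le (w - y) i
    rw [Real.norm_eq_abs] at h
    linarith [norm_sub_le w y]
  have hpoint : ∀ v, f (p v) - f y
      ≤ ∑ i, s v i * (w - y) i + G * (ε * (N * d) + ρ * D) := by
    intro v
    have h1 := hs v y
    have h2 : inner ℝ (s v) (y - p v)
        = -inner ℝ (s v) (w - y) - inner ℝ (s v) (ε • gridPoint v - ρ • w) := by
      rw [← inner_neg_right, ← inner_sub_right]
      congr 1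
      simp only [p]
      module
    have h3 : inner ℝ (s v) (w - y) = ∑ i, s v i * (w - y) i := by
      simp [PiLp.inner_apply, mul_comm]
    have h4 : inner ℝ (s v) (ε • gridPoint v - ρ • w) ≤ G * (ε * (N * d) + ρ * D) := by
      refine (real_inner_le_norm _ _).trans ?_
      gcongr
      · exact hsG v
      · refine (norm_sub_le _ _).trans ?_
        rw [norm_smul, norm_smul, Real.norm_of_nonneg hε.le, Real.norm_of_nonneg hρ]
        gcongr
        exact norm_gridPoint_le v
    linarith
  have hinner : ∀ i v, inner ℝ ((d * Δ i v) • EuclideanSpace.single i (1 : ℝ)) (w - y)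
      = d * (Δ i v * (w - y) i) := fun i v => by
    simp [inner_smul_left, EuclideanSpace.inner_single_left, mul_assoc]
  set n : ℝ := ((Fintype.card (Fin d → Fin N) : ℕ) : ℝ) with hn
  have hmain : ∑ v, (f (p v) - f y) - ∑ i, ∑ v, Δ i v * (w - y) i
      ≤ n * (G * (ε * (N * d) + ρ * D) + d * (2 * D * (2 * G / N))) := by
    have h1 : ∑ v, (f (p v) - f y)
        ≤ ∑ i, ∑ v, s v i * (w - y) i + n * (G * (ε * (N * d) + ρ * D)) := by
      refine (Finset.sum_le_sum fun v _ => hpoint v).trans_eq ?_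
      rw [Finset.sum_add_distrib, Finset.sum_comm, Finset.sum_const, Finset.card_univ,
        nsmul_eq_mul]
    have h2 : ∑ i, ∑ v, s v i * (w - y) i - ∑ i, ∑ v, Δ i v * (w - y) i
        ≤ ∑ _i : Fin d, 2 * D * (n * (2 * G / N)) := by
      rw [← Finset.sum_sub_distrib]
      refine Finset.sum_le_sum fun i _ => ?_
      rw [← Finset.sum_mul, ← Finset.sum_mul, ← sub_mul, ← Finset.sum_sub_distrib, mul_comm]
      refine (le_abs_self _).trans ?_
      rw [abs_mul]
      exact mul_le_mul (hwy i) (hdiff i) (abs_nonneg _) ((abs_nonneg _).trans (hwy i))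
    rw [Finset.sum_const, Finset.card_univ, Fintype.card_fin, nsmul_eq_mul] at h2
    linarith
  have hlhs : ∑ σ : Fin d × (Fin d → Fin N), (f (p σ.2) - f y
        - inner ℝ ((d * Δ σ.1 σ.2) • EuclideanSpace.single σ.1 (1 : ℝ)) (w - y))
      = d * (∑ v, (f (p v) - f y) - ∑ i, ∑ v, Δ i v * (w - y) i) := by
    simp only [hinner, Finset.sum_sub_distrib, Fintype.sum_prod_type, Finset.sum_const,
      Finset.card_univ, Fintype.card_fin, nsmul_eq_mul, ← Finset.mul_sum, mul_sub]
    rw [Fintype.card_prod, Fintype.card_fin, Nat.cast_mul, mul_assoc]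
  refine hlhs.trans_le ?_
  rw [Fintype.card_prod, Fintype.card_fin, Nat.cast_mul, ← hn, mul_assoc]
  gcongr

/-- The gradient estimate extracted from one round when the base query is the played point
moved by `ε` along a coordinate direction. -/
noncomputable def gradientEstimate {d : ℕ} (ε : ℝ) (q : BCORecord d) :
    EuclideanSpace ℝ (Fin d) :=
  (d / ε ^ 2 * (q.2.2.2.2.1 - q.2.2.2.1)) • (q.2.1 - q.1)

/-- The random draws of the bandit algorithm: for each round a coordinate and a grid point. -/
abbrev CoordinateDraws (d T : ℕ) := Fin T → Fin d × (Fin d → Fin T)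

/-- The bandit algorithm driven by a learner `W`: play a random grid perturbation of the
learner's point shrunk by `1 - ρ`, and query the played point moved by `ε` along a uniformly
random coordinate direction. -/
noncomputable def coordinateAlg {d T : ℕ} [NeZero d] [NeZero T]
    {K : Set (EuclideanSpace ℝ (Fin d))}
    (W : List (EuclideanSpace ℝ (Fin d)) → EuclideanSpace ℝ (Fin d)) (ε ρ : ℝ)
    (hK : ∀ h (v : Fin d → Fin T), (1 - ρ) • W h + ε • gridPoint v ∈ K) : BCOAlg3 d K where
  Ω := CoordinateDraws d T
  inst := ⊤
  μ := @PMF.toMeasure _ ⊤ (PMF.uniformOfFintype (CoordinateDraws d T))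
  prob := @PMF.toMeasure.isProbabilityMeasure _ ⊤ _
  act h ω :=
    ((1 - ρ) • W (h.map (gradientEstimate ε))
        + ε • gridPoint (ω (Fin.ofNat T h.length)).2,
      (1 - ρ) • W (h.map (gradientEstimate ε))
        + ε • gridPoint (ω (Fin.ofNat T h.length)).2
        + ε • EuclideanSpace.single (ω (Fin.ofNat T h.length)).1 1,
      EuclideanSpace.single 0 1)
  play_mem _ _ := hK _ _
  unit_dir _ _ := by simp

theorem length_bcoHist3 {d : ℕ} {K : Set (EuclideanSpace ℝ (Fin d))} (A : BCOAlg3 d K) (δ : ℝ)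
    (ℓ : ℕ → EuclideanSpace ℝ (Fin d) → ℝ) (t : ℕ) (ω : A.Ω) :
    (bcoHist3 A δ ℓ t ω).length = t := by
  induction t with
  | zero => rfl
  | succ t ih => simp [bcoHist3, ih]

section coordinateAlg

variable {d T : ℕ} [NeZero d] [NeZero T] {K : Set (EuclideanSpace ℝ (Fin d))}
  {W : List (EuclideanSpace ℝ (Fin d)) → EuclideanSpace ℝ (Fin d)} {ε ρ : ℝ}
  {hK : ∀ h (v : Fin d → Fin T), (1 - ρ) • W h + ε • gridPoint v ∈ K}

theorem integrable_coordinateAlg (F : (CoordinateDraws d T) → ℝ) :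
    Integrable F (coordinateAlg W ε ρ hK).μ := by
  let : MeasurableSpace (CoordinateDraws d T) := ⊤
  have : MeasurableSingletonClass (CoordinateDraws d T) := ⟨fun _ => trivial⟩
  exact Integrable.of_finite
    (μ := (PMF.uniformOfFintype (CoordinateDraws d T)).toMeasure)

theorem integral_coordinateAlg (F : (CoordinateDraws d T) → ℝ) :
    ∫ ω, F ω ∂(coordinateAlg W ε ρ hK).μ
      = (Fintype.card (CoordinateDraws d T) : ℝ)⁻¹ * ∑ ω, F ω := by
  let : MeasurableSpace (CoordinateDraws d T) := ⊤
  have : MeasurableSingletonClass (CoordinateDraws d T) := ⟨fun _ => trivial⟩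
  refine (PMF.integral_eq_sum
    (PMF.uniformOfFintype (CoordinateDraws d T)) F).trans ?_
  rw [Finset.mul_sum]
  refine Finset.sum_congr rfl fun ω _ => ?_
  simp only [PMF.uniformOfFintype_apply, ENNReal.toReal_inv, ENNReal.toReal_natCast, smul_eq_mul]

/-- The history before round `t` is determined by the random draws before round `t`. -/
theorem bcoHist3_coordinateAlg_congr (δ : ℝ) (ℓ : ℕ → EuclideanSpace ℝ (Fin d) → ℝ) (t : ℕ)
    (ω ω' : CoordinateDraws d T)
    (h : ∀ i < t, ω (Fin.ofNat T i) = ω' (Fin.ofNat T i)) :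
    bcoHist3 (coordinateAlg W ε ρ hK) δ ℓ t ω = bcoHist3 (coordinateAlg W ε ρ hK) δ ℓ t ω' := by
  induction t with
  | zero => rfl
  | succ t ih =>
    have hlen := length_bcoHist3 (coordinateAlg W ε ρ hK) δ ℓ t ω'
    simp only [bcoHist3, ih fun i hi => h i (hi.trans t.lt_succ_self)]
    simp only [coordinateAlg] at hlen ⊢
    rw [hlen, h t t.lt_succ_self]

theorem bcoPlay3_coordinateAlg (δ : ℝ) (ℓ : ℕ → EuclideanSpace ℝ (Fin d) → ℝ) (t : ℕ)
    (ω : CoordinateDraws d T) :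
    bcoPlay3 (coordinateAlg W ε ρ hK) δ ℓ t ω
      = (1 - ρ) • W ((bcoHist3 (coordinateAlg W ε ρ hK) δ ℓ t ω).map (gradientEstimate ε))
        + ε • gridPoint (ω (Fin.ofNat T t)).2 :=
  congrArg (fun k => (1 - ρ) • W ((bcoHist3 (coordinateAlg W ε ρ hK) δ ℓ t ω).map
      (gradientEstimate ε)) + ε • gridPoint (ω (Fin.ofNat T k)).2)
    (length_bcoHist3 (coordinateAlg W ε ρ hK) δ ℓ t ω)

theorem map_gradientEstimate_bcoHist3_succ (hε : 0 < ε) (δ : ℝ)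
    (ℓ : ℕ → EuclideanSpace ℝ (Fin d) → ℝ) (t : ℕ) (ω : CoordinateDraws d T)
    {x : EuclideanSpace ℝ (Fin d)} (hx : bcoPlay3 (coordinateAlg W ε ρ hK) δ ℓ t ω = x) :
    (bcoHist3 (coordinateAlg W ε ρ hK) δ ℓ (t + 1) ω).map (gradientEstimate ε)
      = (bcoHist3 (coordinateAlg W ε ρ hK) δ ℓ t ω).map (gradientEstimate ε) ++
        [(d * ((ℓ t (x + ε • EuclideanSpace.single (ω (Fin.ofNat T t)).1 1) - ℓ t x) / ε)) •
          EuclideanSpace.single (ω (Fin.ofNat T t)).1 (1 : ℝ)] := by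
  subst hx
  set A := coordinateAlg W ε ρ hK
  have hquery : (A.act (bcoHist3 A δ ℓ t ω) ω).2.1
      = bcoPlay3 A δ ℓ t ω + ε • EuclideanSpace.single (ω (Fin.ofNat T t)).1 1 :=
    congrArg (fun k => bcoPlay3 A δ ℓ t ω + ε • EuclideanSpace.single (ω (Fin.ofNat T k)).1 1)
      (length_bcoHist3 A δ ℓ t ω)
  simp only [bcoHist3, List.map_append, List.map_cons, List.map_nil]
  congr 2
  change (d / ε ^ 2 * (ℓ t (A.act (bcoHist3 A δ ℓ t ω) ω).2.1 - ℓ t (bcoPlay3 A δ ℓ t ω))) •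
    ((A.act (bcoHist3 A δ ℓ t ω) ω).2.1 - bcoPlay3 A δ ℓ t ω) = _
  rw [hquery, add_sub_cancel_left, smul_smul]
  congr 1
  field_simp
  rfl

end coordinateAlg

/-- Strongly adaptive regret for bandit convex optimization with three
queries per round.  There is a universal constant `c > 0` such that for every dimension
`d ≥ 1`, horizon `T ≥ 2`, and convex domain `K` with `r𝔹 ⊆ K ⊆ D𝔹` (condition number
`κ = D/r`), there is a randomized BCO algorithm that plays `x_t ∈ K` and queries two
additional points of the form `A(t)` and `A(t) + δ_t • u` with `δ_t = 1/(κ T)` and `u`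
a unit vector, whose expected adaptive regret on every contiguous interval
`[j,s] ⊆ [T]` (rounds indexed `0, …, T−1`) against every comparator in `K` is at most
`c · d G D √|I| (log T)²`, for all convex, `G`-Lipschitz, nonnegative losses. -/
theorem bco_three_query_adaptive_regret :
    ∃ c : ℝ, 0 < c ∧
      ∀ (d T : ℕ) (r D G : ℝ) (K : Set (EuclideanSpace ℝ (Fin d))),
        1 ≤ d → 2 ≤ T → 0 < r → r ≤ D → 0 < G →
        Convex ℝ K →
        Metric.closedBall (0 : EuclideanSpace ℝ (Fin d)) r ⊆ K →
        K ⊆ Metric.closedBall (0 : EuclideanSpace ℝ (Fin d)) D →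
        ∃ A : BCOAlg3 d K,
          ∀ ℓ : ℕ → EuclideanSpace ℝ (Fin d) → ℝ,
            (∀ t, ConvexOn ℝ Set.univ (ℓ t)) →
            (∀ t x y, |ℓ t x - ℓ t y| ≤ G * ‖x - y‖) →
            (∀ t x, 0 ≤ ℓ t x) →
            ∀ j s : ℕ, j ≤ s → s < T →
              (∀ t, Integrable (fun ω => ℓ t (bcoPlay3 A (1 / ((D / r) * T)) ℓ t ω)) A.μ) ∧
              ∀ y ∈ K,
                (∑ t ∈ Finset.Icc j s, ∫ ω, ℓ t (bcoPlay3 A (1 / ((D / r) * T)) ℓ t ω) ∂A.μ)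
                  - ∑ t ∈ Finset.Icc j s, ℓ t y
                ≤ c * d * G * D * Real.sqrt ((s : ℝ) - j + 1) * Real.log T ^ 2 := by
  refine ⟨200, by norm_num, ?_⟩
  intro d T r D G K hd hT hr hrD hG hKc hrK hKD
  have : NeZero d := ⟨by omega⟩
  have : NeZero T := ⟨by omega⟩
  have hD : 0 < D := hr.trans_le hrD
  have hd1 : (1 : ℝ) ≤ d := by exact_mod_cast hd
  have hT2 : (2 : ℝ) ≤ T := by exact_mod_cast hT
  have hCD : closure K ⊆ Metric.closedBall 0 D := closure_minimal hKD Metric.isClosed_closedBall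
  have h0K : (0 : EuclideanSpace ℝ (Fin d)) ∈ K := hrK (Metric.mem_closedBall_self hr.le)
  obtain ⟨W, hWC, hW⟩ := exists_strongly_adaptive_learner (C := closure K) (D := D)
    (L := d * G) (T := T) ⟨0, subset_closure h0K⟩ isClosed_closure hKc.closure hCD hD
    (by positivity) hT
  obtain ⟨ε, hεdef⟩ : ∃ ε : ℝ, ε = r / (2 * T * (T * d)) := ⟨_, rfl⟩
  have hε : 0 < ε := by rw [hεdef]; positivity
  have hεT : ε * (T * d) = r / (2 * T) := by rw [hεdef]; field_simp
  have hK : ∀ h (v : Fin d → Fin T), (1 - 1 / (T : ℝ)) • W h + ε • gridPoint v ∈ K := by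
    intro h v
    have hsplit : ε • gridPoint v = (1 / (T : ℝ)) • ((T * ε) • gridPoint v) := by
      rw [smul_smul]
      congr 1
      field_simp
    have hint : ((T * ε) • gridPoint v : EuclideanSpace ℝ (Fin d)) ∈ interior K := by
      refine interior_mono hrK (Metric.ball_subset_interior_closedBall ?_)
      rw [mem_ball_zero_iff, norm_smul, Real.norm_of_nonneg (by positivity)]
      calc T * ε * ‖gridPoint v‖ ≤ T * ε * (T * d) := by
            gcongr
            exact norm_gridPoint_le v
        _ = r / 2 := by
            rw [mul_assoc, hεT]
            field_simp
        _ < r := by linarith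
    rw [hsplit]
    refine interior_subset (hKc.combo_closure_interior_mem_interior (hWC h) hint ?_ ?_ ?_)
    · have : 1 / (T : ℝ) ≤ 1 := (div_le_one (by positivity)).2 (by linarith)
      linarith
    · positivity
    · ring
  refine ⟨coordinateAlg W ε (1 / T) hK, ?_⟩
  intro ℓ hconv hlip _ j s hjs hsT
  refine ⟨fun t => integrable_coordinateAlg _, fun y hy => ?_⟩
  set A := coordinateAlg W ε (1 / T) hK
  set δ := 1 / ((D / r) * T)
  obtain ⟨X, hX⟩ : ∃ X : ℕ → CoordinateDraws d T → EuclideanSpace ℝ (Fin d),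
    ∀ t (ω : CoordinateDraws d T), bcoPlay3 A δ ℓ t ω = X t ω := ⟨_, fun _ _ => rfl⟩
  obtain ⟨H, hH⟩ : ∃ H : ℕ → CoordinateDraws d T → List (EuclideanSpace ℝ (Fin d)),
    ∀ t (ω : CoordinateDraws d T), (bcoHist3 A δ ℓ t ω).map (gradientEstimate ε) = H t ω :=
    ⟨_, fun _ _ => rfl⟩
  let w : ℕ → CoordinateDraws d T → EuclideanSpace ℝ (Fin d) := fun t ω => W (H t ω)
  let x : EuclideanSpace ℝ (Fin d) → Fin d × (Fin d → Fin T) → EuclideanSpace ℝ (Fin d) :=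
    fun w σ => (1 - 1 / (T : ℝ)) • w + ε • gridPoint σ.2
  let est : ℕ → EuclideanSpace ℝ (Fin d) → Fin d × (Fin d → Fin T) →
      EuclideanSpace ℝ (Fin d) := fun t w σ =>
    (d * ((ℓ t (x w σ + ε • EuclideanSpace.single σ.1 1) - ℓ t (x w σ)) / ε)) •
      EuclideanSpace.single σ.1 (1 : ℝ)
  let g : CoordinateDraws d T → ℕ → EuclideanSpace ℝ (Fin d) := fun ω t =>
    est t (w t ω) (ω (Fin.ofNat T t))
  have hplay : ∀ t ω, X t ω = x (w t ω) (ω (Fin.ofNat T t)) := by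
    intro t ω
    refine (hX t ω).symm.trans ((bcoPlay3_coordinateAlg δ ℓ t ω).trans ?_)
    exact congrArg (fun h => x (W h) (ω (Fin.ofNat T t))) (hH t ω)
  have hhist : ∀ ω t, H t ω = (List.range t).map (g ω) := by
    intro ω t
    induction t with
    | zero => exact (hH 0 ω).symm
    | succ t ih =>
      refine (hH (t + 1) ω).symm.trans ((map_gradientEstimate_bcoHist3_succ hε δ ℓ t ω
        ((hX t ω).trans (hplay t ω))).trans ?_)
      rw [List.range_succ, List.map_append, ← ih]
      exact congrArg (· ++ [g ω t]) (hH t ω)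
  have hg : ∀ ω t, ‖g ω t‖ ≤ d * G := by
    intro ω t
    have h1 := hlip t (x (w t ω) (ω (Fin.ofNat T t))
      + ε • EuclideanSpace.single (ω (Fin.ofNat T t)).1 1) (x (w t ω) (ω (Fin.ofNat T t)))
    rw [add_sub_cancel_left, norm_smul, Real.norm_of_nonneg hε.le, PiLp.norm_single,
      norm_one, mul_one] at h1
    simp only [g, est]
    rw [norm_smul, PiLp.norm_single, norm_one, mul_one, Real.norm_eq_abs, abs_mul,
      abs_div, abs_of_pos hε, Nat.abs_cast]
    gcongr
    rwa [div_le_iff₀ hε]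
  set B : ℝ := G * (ε * (T * d) + 1 / T * D) + d * (2 * D * (2 * G / T)) with hB
  have hround : ∀ t < T,
      ∑ ω, (ℓ t (X t ω) - ℓ t y - inner ℝ (g ω t) (w t ω - y))
        ≤ Fintype.card (CoordinateDraws d T) * B := by
    intro t ht
    have hw : ∀ ω σ, w t (Function.update ω (Fin.ofNat T t) σ) = w t ω := by
      intro ω σ
      refine congrArg W ((hH _ _).symm.trans ((congrArg (List.map (gradientEstimate ε))
        (bcoHist3_coordinateAlg_congr δ ℓ t _ _ fun i hi => ?_)).trans (hH _ _)))
      refine Function.update_of_ne (fun h => ?_) _ _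
      have := congrArg Fin.val h
      simp only [Fin.val_ofNat, Nat.mod_eq_of_lt ht, Nat.mod_eq_of_lt (hi.trans ht)] at this
      omega
    have h1 := sum_sum_update (fun ω : CoordinateDraws d T =>
      ℓ t (X t ω) - ℓ t y - inner ℝ (g ω t) (w t ω - y)) (Fin.ofNat T t)
    simp only [hplay, g, hw, Function.update_self] at h1 ⊢
    have hcard : (0 : ℝ) < Fintype.card (Fin d × (Fin d → Fin T)) :=
      Nat.cast_pos.2 Fintype.card_pos
    refine le_of_mul_le_mul_left (h1.symm.le.trans ?_) hcard
    refine (Finset.sum_le_sum fun ω _ => sum_loss_sub_le_sum_inner (by omega) hε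
      (by positivity) hG.le (hconv t) (hlip t) (mem_closedBall_zero_iff.1 (hCD (hWC _)))
      (mem_closedBall_zero_iff.1 (hKD hy))).trans_eq ?_
    rw [Finset.sum_const, Finset.card_univ, nsmul_eq_mul]
    ring
  obtain ⟨n, hn⟩ : ∃ n, n = s + 1 - j := ⟨_, rfl⟩
  have hnR : (s : ℝ) - j + 1 = n := by
    rw [hn, Nat.cast_sub (by omega)]
    push_cast
    ring
  have hnT : (n : ℝ) ≤ T := by exact_mod_cast (by omega : n ≤ T)
  have hn1 : (1 : ℝ) ≤ n := by exact_mod_cast (by omega : 1 ≤ n)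
  have hIcc : ∀ F : ℕ → ℝ, ∑ t ∈ Finset.Icc j s, F t = ∑ i ∈ Finset.range n, F (j + i) := by
    intro F
    rw [hn, ← Finset.sum_Ico_eq_sum_range]
    rfl
  set c : ℝ := ((Fintype.card (CoordinateDraws d T) : ℕ) : ℝ) with hc
  have hc0 : 0 < c := Nat.cast_pos.2 Fintype.card_pos
  have hregret : ∀ ω, ∑ i ∈ Finset.range n, inner ℝ (g ω (j + i)) (w (j + i) ω - y)
      ≤ D * (d * G) * √n * (8 * Real.log T + 13) := by
    intro ω
    have h := hW (g ω) (hg ω) j n (by omega) (by omega) y (subset_closure hy)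
    simpa only [← hhist] using h
  have hexp : (∑ t ∈ Finset.Icc j s, ∫ ω, ℓ t (bcoPlay3 A δ ℓ t ω) ∂A.μ)
      - ∑ t ∈ Finset.Icc j s, ℓ t y ≤ n * B + D * (d * G) * √n * (8 * Real.log T + 13) := by
    rw [hIcc, hIcc, ← Finset.sum_sub_distrib]
    have h1 : ∀ i, ∫ ω, ℓ (j + i) (bcoPlay3 A δ ℓ (j + i) ω) ∂A.μ - ℓ (j + i) y
        = c⁻¹ * (∑ ω, (ℓ (j + i) (X (j + i) ω) - ℓ (j + i) y
            - inner ℝ (g ω (j + i)) (w (j + i) ω - y)))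
          + c⁻¹ * ∑ ω, inner ℝ (g ω (j + i)) (w (j + i) ω - y) := by
      intro i
      have h2 : ∫ ω, ℓ (j + i) (bcoPlay3 A δ ℓ (j + i) ω) ∂A.μ
          = c⁻¹ * ∑ ω, ℓ (j + i) (X (j + i) ω) := by
        refine (integral_coordinateAlg _).trans ?_
        exact congrArg (c⁻¹ * ·) (Finset.sum_congr rfl fun ω _ => congrArg _ (hX _ ω))
      rw [h2, Finset.sum_sub_distrib, Finset.sum_sub_distrib,
        Finset.sum_const, Finset.card_univ, nsmul_eq_mul, ← hc]
      field_simp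
      ring
    rw [Finset.sum_congr rfl fun i _ => h1 i, Finset.sum_add_distrib, ← Finset.mul_sum,
      ← Finset.mul_sum, Finset.sum_comm (s := Finset.range n) (f := fun i ω =>
        inner ℝ (g ω (j + i)) (w (j + i) ω - y)), inv_mul_eq_div, inv_mul_eq_div]
    refine add_le_add ((div_le_iff₀ hc0).2 ?_) ((div_le_iff₀ hc0).2 ?_)
    · refine (Finset.sum_le_sum fun i hi => hround (j + i) ?_).trans_eq ?_
      · have := Finset.mem_range.1 hi
        omega
      · rw [Finset.sum_const, Finset.card_range, nsmul_eq_mul]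
        ring
    · refine (Finset.sum_le_sum fun ω _ => hregret ω).trans_eq ?_
      rw [Finset.sum_const, Finset.card_univ, nsmul_eq_mul, ← hc]
      ring
  refine hexp.trans ?_
  rw [hnR]
  have hlog : 1 / 2 ≤ Real.log T :=
    le_trans (by linarith [Real.log_two_gt_d9]) (Real.log_le_log (by norm_num) hT2)
  have hBle : n * B ≤ 6 * (D * (d * G) * √n) := by
    have h1 : B ≤ 6 * (D * (d * G)) / T := by
      rw [hB, hεT, le_div_iff₀ (by positivity)]
      have : (G * (r / (2 * T) + 1 / T * D) + d * (2 * D * (2 * G / T))) * T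
          = G * (r / 2 + D) + 4 * (d * G * D) := by
        field_simp
        ring
      rw [this]
      have h2 : G * (r / 2 + D) ≤ G * (2 * D) := by
        gcongr
        linarith
      have h3 : G * D ≤ d * (G * D) := le_mul_of_one_le_left (by positivity) hd1
      linarith
    have h2 : n * B ≤ 6 * (D * (d * G)) := by
      calc n * B ≤ n * (6 * (D * (d * G)) / T) := by gcongr
        _ = 6 * (D * (d * G)) * (n / T) := by ring
        _ ≤ 6 * (D * (d * G)) * 1 := by
            gcongr
            exact (div_le_one (by positivity)).2 hnT
        _ = _ := mul_one _
    have h3 : 1 ≤ √(n : ℝ) := Real.one_le_sqrt.2 hn1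
    have h4 := le_mul_of_one_le_right (by positivity : 0 ≤ 6 * (D * (d * G))) h3
    linarith
  calc n * B + D * (d * G) * √n * (8 * Real.log T + 13)
      ≤ D * (d * G) * √n * (8 * Real.log T + 19) := by linarith
    _ ≤ D * (d * G) * √n * (200 * Real.log T ^ 2) := by
        gcongr
        nlinarith
    _ = 200 * d * G * D * √n * Real.log T ^ 2 := by ring
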